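/- arXiv:1110.6680 — 2 statements merged into one kernel-verified Lean document; each statement's English description precedes it below -/
import Mathlib

section
/- For every even natural number $k \geq 2$ and every real number $y$, the series $\sum_{n\geq 1} (-1)^{n+1} \binom{2n+1}{k} \frac{y^{2n+1}}{(2n+1)!}$ converges and its sum equals $\frac{y^k}{k!} \cdot (-1)^{(k+2)/2} \sin y$. -/
/-!
Since `C(N, k) / N! = 1 / (k! (N - k)!)`, every term with `N = 2 n + 3 ≥ k` equals `y ^ k / k!`
times, up to sign, `y ^ (N - k) / (N - k)!`. For even `k`, the number `N - k` runs over all odd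
naturals, so the series is a shift of the sine series (`Real.hasSum_sin`); the terms with
`N < k` vanish, and the shift of the index accounts for the sign `(-1) ^ ((k + 2) / 2)`.
-/

/-- For every even natural number `k ≥ 2` and every real `y`, the series
`∑_{n ≥ 1} (-1)^(n+1) * C(2n+1, k) * y^(2n+1) / (2n+1)!`
converges and its sum equals `y^k / k! * (-1)^((k+2)/2) * sin y`.
(The series is reindexed by `n ↦ n + 1` so that it runs over all of `ℕ`.) -/
theorem goddard_Sk_even (k : ℕ) (hk2 : 2 ≤ k) (hk : Even k) (y : ℝ) :
    HasSum
      (fun n : ℕ =>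
        (-1 : ℝ) ^ (n + 2) * (Nat.choose (2 * (n + 1) + 1) k : ℝ) *
          y ^ (2 * (n + 1) + 1) / (Nat.factorial (2 * (n + 1) + 1) : ℝ))
      (y ^ k / (Nat.factorial k : ℝ) * ((-1 : ℝ) ^ ((k + 2) / 2) * Real.sin y)) := by
  -- Write `k = 2 (m + 1)`; the terms with index `n < m` vanish since then `2 n + 3 < k`.
  obtain ⟨m, rfl⟩ : ∃ m, k = 2 * (m + 1) := by
    obtain ⟨r, rfl⟩ := hk
    exact ⟨r - 1, by omega⟩
  rw [← (add_left_injective m).hasSum_iff]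
  · have h := (Real.hasSum_sin y).mul_left
      (y ^ (2 * (m + 1)) / (Nat.factorial (2 * (m + 1)) : ℝ) * (-1 : ℝ) ^ (m + 2))
    have hm : (2 * (m + 1) + 2) / 2 = m + 2 := by omega
    rw [hm, ← mul_assoc]
    refine (congrArg (fun f => HasSum f _) ?_).mpr h
    funext j
    -- With `n = j + m` we have `2 n + 3 = (2 j + 1) + k`, and
    -- `C((2 j + 1) + k, k) / ((2 j + 1) + k)! = 1 / (k! (2 j + 1)!)`.
    have e : 2 * (j + m + 1) + 1 = (2 * j + 1) + 2 * (m + 1) := by ring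
    simp only [Function.comp_apply]
    rw [e, ← Nat.choose_symm_add, Nat.cast_add_choose]
    have h1 := Nat.cast_ne_zero (R := ℝ).mpr (Nat.factorial_ne_zero (2 * j + 1 + 2 * (m + 1)))
    have h2 := Nat.cast_ne_zero (R := ℝ).mpr (Nat.factorial_ne_zero (2 * j + 1))
    have h3 := Nat.cast_ne_zero (R := ℝ).mpr (Nat.factorial_ne_zero (2 * (m + 1)))
    field_simp
    ring
  · intro n hn
    have hlt : n < m := by
      by_contra! h
      exact hn ⟨n - m, Nat.sub_add_cancel h⟩
    rw [Nat.choose_eq_zero_of_lt (by omega)]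
    simp
end

section
/- For every odd natural number $k \geq 2$ (i.e., odd $k \geq 3$) and every real number $y$, the series $\sum_{n\geq 1} (-1)^{n+1} \binom{2n+1}{k} \frac{y^{2n+1}}{(2n+1)!}$ converges and its sum equals $\frac{y^k}{k!} \cdot (-1)^{(k+1)/2} \cos y$. -/
/-!
Since `C(N, k) / N! = 1 / (k! (N - k)!)` for `N ≥ k`, and `C(N, k) = 0` for `N < k`, the terms with
`2 * (n + 1) + 1 < k` vanish. Writing `k = 2 * (m + 1) + 1`, the term of index `n = j + m` is
`y ^ k / k! * (-1) ^ (m + 2)` times the `j`-th term of the power series of `cos y`, and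
`m + 2 = (k + 1) / 2`.
-/

/-- For every odd natural number `k ≥ 2` (i.e. odd `k ≥ 3`) and every real `y`, the series
`∑_{n ≥ 1} (-1)^(n+1) * C(2n+1, k) * y^(2n+1) / (2n+1)!`
converges and its sum equals `y^k / k! * (-1)^((k+1)/2) * cos y`.
(The series is reindexed by `n ↦ n + 1` so that it runs over all of `ℕ`.) -/
theorem goddard_Sk_odd (k : ℕ) (hk2 : 2 ≤ k) (hk : Odd k) (y : ℝ) :
    HasSum
      (fun n : ℕ =>
        (-1 : ℝ) ^ (n + 2) * (Nat.choose (2 * (n + 1) + 1) k : ℝ) *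
          y ^ (2 * (n + 1) + 1) / (Nat.factorial (2 * (n + 1) + 1) : ℝ))
      (y ^ k / (Nat.factorial k : ℝ) * ((-1 : ℝ) ^ ((k + 1) / 2) * Real.cos y)) := by
  obtain ⟨m, rfl⟩ : ∃ m, k = 2 * (m + 1) + 1 := by
    obtain ⟨r, rfl⟩ := hk
    exact ⟨r - 1, by omega⟩
  rw [show (2 * (m + 1) + 1 + 1) / 2 = m + 2 by omega]
  -- Only the indices `n ≥ m` contribute.
  rw [← (add_left_injective m).hasSum_iff]
  · have h := (Real.hasSum_cos y).mul_left
      (y ^ (2 * (m + 1) + 1) / (Nat.factorial (2 * (m + 1) + 1) : ℝ) * (-1 : ℝ) ^ (m + 2))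
    rw [mul_assoc] at h
    refine h.congr_fun ?_
    intro j
    have e : 2 * (j + m + 1) + 1 = (2 * (m + 1) + 1) + 2 * j := by ring
    have hc := Nat.add_choose_mul_factorial_mul_factorial (2 * (m + 1) + 1) (2 * j)
    simp only [Function.comp_apply, e]
    rw [← Nat.choose_symm_add] at hc
    rw [← hc]
    have h0 : (Nat.choose (2 * (m + 1) + 1 + 2 * j) (2 * (m + 1) + 1) : ℝ) ≠ 0 := by
      exact_mod_cast (Nat.choose_pos (Nat.le_add_right _ _)).ne'
    have h1 : (Nat.factorial (2 * (m + 1) + 1) : ℝ) ≠ 0 := by positivity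
    have h2 : (Nat.factorial (2 * j) : ℝ) ≠ 0 := by positivity
    push_cast
    generalize (Nat.choose (2 * (m + 1) + 1 + 2 * j) (2 * (m + 1) + 1) : ℝ) = c at *
    generalize (Nat.factorial (2 * (m + 1) + 1) : ℝ) = a at *
    generalize (Nat.factorial (2 * j) : ℝ) = b at *
    field_simp
    ring
  · intro n hn
    have hlt : n < m := by
      by_contra hle
      exact hn ⟨n - m, by simp only; omega⟩
    rw [Nat.choose_eq_zero_of_lt (by omega)]
    simp
end
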